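/- Let G be a simple graph whose vertex set is partitioned into a clique A and a clique {a, b, c} of size 3, with arbitrary edges between A and {a, b, c}. If no vertex of A is adjacent to all three of a, b, c, and every vertex of A is adjacent to at least one of a, b, c, then G is word-representable. -/

import Mathlib

/-- Two distinct letters `x` and `y` alternate in the word `w` if, after deleting all
letters other than `x` and `y`, no two consecutive letters of the remaining word are equal. -/
def Alternate {V : Type*} [DecidableEq V] (w : List V) (x y : V) : Prop :=
  (w.filter fun z => decide (z = x ∨ z = y)).Chain' (· ≠ ·)

/-- A word `w` represents the simple graph `G` if every vertex occurs in `w` at least once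
and two distinct vertices alternate in `w` exactly when they are adjacent in `G`. -/
def Represents {V : Type*} [DecidableEq V] (G : SimpleGraph V) (w : List V) : Prop :=
  (∀ v : V, v ∈ w) ∧ ∀ x y : V, x ≠ y → (Alternate w x y ↔ G.Adj x y)

/-- A simple graph is word-representable if some word represents it. -/
def WordRepresentable {V : Type*} [DecidableEq V] (G : SimpleGraph V) : Prop :=
  ∃ w : List V, Represents G w

/-!
Two vertices outside `{a, b, c}` with the same neighbours in `{a, b, c}` are twins, so `G` arises
from a graph on at most nine vertices by replacing vertices with cliques. Replacing each letter of
a word by a list of the clique that replaces it turns a word representing the small graph into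
one representing `G`, and a word for the nine-vertex graph can be written down.
-/

section CliqueBlowup

variable {V W : Type*}

/-- The graph obtained from `H` by replacing each vertex `t` with a clique on the fibre of `φ` over
`t`. Since `φ` need not be surjective, vertices of `H` may also be deleted. -/
def cliqueBlowup (H : SimpleGraph W) (φ : V → W) : SimpleGraph V where
  Adj x y := x ≠ y ∧ (φ x = φ y ∨ H.Adj (φ x) (φ y))
  symm := ⟨fun _ _ h => ⟨h.1.symm, h.2.imp Eq.symm SimpleGraph.Adj.symm⟩⟩

theorem isChain_ne_flatten_replicate_pair {x y : V} (hxy : x ≠ y) (n : ℕ) :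
    (List.replicate n [x, y]).flatten.IsChain (· ≠ ·) := by
  rw [List.isChain_flatten (by simp)]
  exact ⟨by simp [hxy], List.isChain_replicate_of_rel n (by simp [hxy.symm])⟩

theorem alternate_iff_isChain [DecidableEq V] {w : List V} {x y : V} :
    Alternate w x y ↔ (w.filter fun z => z = x ∨ z = y).IsChain (· ≠ ·) :=
  Iff.rfl

variable [Fintype V] [DecidableEq W]

/-- An enumeration, in an arbitrary order, of the vertices that `φ` sends to `t`. -/
noncomputable def fiberList (φ : V → W) (t : W) : List V :=
  (Finset.univ.filter fun v => φ v = t).toList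

/-- The word obtained from `w` by replacing every occurrence of a letter `t` with the same
enumeration of the fibre of `φ` over `t`. -/
noncomputable def blowupWord (φ : V → W) (w : List W) : List V :=
  w.flatMap (fiberList φ)

theorem mem_fiberList {φ : V → W} {t : W} {v : V} : v ∈ fiberList φ t ↔ φ v = t := by
  simp [fiberList]

theorem nodup_fiberList (φ : V → W) (t : W) : (fiberList φ t).Nodup :=
  Finset.nodup_toList _

variable [DecidableEq V]

theorem filter_fiberList_perm (φ : V → W) (t : W) {x y : V} (hxy : x ≠ y) :
    ((fiberList φ t).filter fun z => z = x ∨ z = y).Perm ([x, y].filter fun z => φ z = t) := by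
  have hpair : [x, y].Nodup := by simpa using hxy
  rw [List.perm_ext_iff_of_nodup ((nodup_fiberList φ t).filter _) (hpair.filter _)]
  intro z
  simp [mem_fiberList, and_comm]

theorem alternate_blowupWord_of_eq {φ : V → W} (w : List W) {x y : V} (hxy : x ≠ y)
    (hφ : φ x = φ y) : Alternate (blowupWord φ w) x y := by
  obtain ⟨p, q, hpq, hfilter⟩ : ∃ p q : V, p ≠ q ∧
      (fiberList φ (φ y)).filter (fun z => z = x ∨ z = y) = [p, q] := by
    have hperm := filter_fiberList_perm φ (φ y) hxy
    simp only [hφ, decide_true, List.filter_cons_of_pos, List.filter_nil] at hperm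
    rcases List.perm_pair.1 hperm with h | h
    exacts [⟨x, y, hxy, h⟩, ⟨y, x, hxy.symm, h⟩]
  have hother : ∀ t, t ≠ φ y → (fiberList φ t).filter (fun z => z = x ∨ z = y) = [] := by
    intro t ht
    simpa [hφ, ht.symm] using filter_fiberList_perm φ t hxy
  have hblowup : (blowupWord φ w).filter (fun z => z = x ∨ z = y) =
      (List.replicate (w.count (φ y)) [p, q]).flatten := by
    induction w with
    | nil => rfl
    | cons t w ih =>
      rw [blowupWord, List.flatMap_cons, List.filter_append, ← blowupWord, ih]
      by_cases ht : t = φ y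
      · rw [ht, hfilter, List.count_cons_self, List.replicate_succ, List.flatten_cons]
      · rw [hother t ht, List.count_cons_of_ne ht, List.nil_append]
  rw [alternate_iff_isChain, hblowup]
  exact isChain_ne_flatten_replicate_pair hpq _

theorem map_filter_fiberList {φ : V → W} {x y : V} (hφ : φ x ≠ φ y) (t : W) :
    ((fiberList φ t).filter fun z => z = x ∨ z = y).map φ =
      [t].filter fun s => s = φ x ∨ s = φ y := by
  have hpair : ([x, y].filter fun z => φ z = t).map φ = [t].filter fun s => s = φ x ∨ s = φ y := by
    by_cases hx : φ x = t <;> by_cases hy : φ y = t <;> grind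
  have hperm := (filter_fiberList_perm φ t (ne_of_apply_ne φ hφ)).map φ
  rw [hpair] at hperm
  by_cases ht : t = φ x ∨ t = φ y <;> simpa [ht] using hperm

theorem map_filter_blowupWord {φ : V → W} (w : List W) {x y : V} (hφ : φ x ≠ φ y) :
    ((blowupWord φ w).filter fun z => z = x ∨ z = y).map φ =
      w.filter fun s => s = φ x ∨ s = φ y := by
  rw [blowupWord, List.filter_flatMap, List.map_flatMap]
  simp only [map_filter_fiberList hφ]
  rw [← List.filter_flatMap, List.flatMap_singleton']

theorem alternate_blowupWord_iff {φ : V → W} (w : List W) {x y : V} (hφ : φ x ≠ φ y) :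
    Alternate (blowupWord φ w) x y ↔ Alternate w (φ x) (φ y) := by
  rw [alternate_iff_isChain, alternate_iff_isChain, ← map_filter_blowupWord w hφ,
    List.isChain_map]
  refine List.IsChain.iff_of_mem_imp fun u v hu hv => ?_
  have hu' : u = x ∨ u = y := by simpa using List.of_mem_filter hu
  have hv' : v = x ∨ v = y := by simpa using List.of_mem_filter hv
  rcases hu' with rfl | rfl <;> rcases hv' with rfl | rfl <;> grind

theorem Represents.cliqueBlowup {H : SimpleGraph W} {w : List W} (hw : Represents H w)
    (φ : V → W) : Represents (cliqueBlowup H φ) (blowupWord φ w) := by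
  refine ⟨fun v => List.mem_flatMap.2 ⟨φ v, hw.1 _, mem_fiberList.2 rfl⟩, fun x y hxy => ?_⟩
  by_cases hφ : φ x = φ y
  · exact iff_of_true (alternate_blowupWord_of_eq w hxy hφ) ⟨hxy, .inl hφ⟩
  · rw [alternate_blowupWord_iff w hφ, hw.2 _ _ hφ]
    exact ⟨fun h => ⟨hxy, .inr h⟩, fun h => h.2.resolve_left hφ⟩

end CliqueBlowup

theorem WordRepresentable.cliqueBlowup {V W : Type*} [Finite V] [DecidableEq V] [DecidableEq W]
    {H : SimpleGraph W} (hH : WordRepresentable H) (φ : V → W) :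
    WordRepresentable (cliqueBlowup H φ) := by
  obtain ⟨w, hw⟩ := hH
  cases nonempty_fintype V
  exact ⟨blowupWord φ w, hw.cliqueBlowup φ⟩

section VertexType

/-- The type of a vertex relative to a clique whose vertices, the hubs, are indexed by `ι`: `hub i`
is a hub itself, `only i` a vertex outside the clique with `i` as its only neighbour among the hubs,
and `missing i` a vertex outside the clique adjacent to every hub except `i`. -/
inductive VertexType (ι : Type*)
  | hub (i : ι)
  | only (i : ι)
  | missing (i : ι)
  deriving DecidableEq, Fintype

namespace VertexType

/-- The graph with exactly one vertex of each type, in which both the hubs and the remaining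
vertices form cliques. -/
def graph (ι : Type*) : SimpleGraph (VertexType ι) where
  Adj
    | hub i, only j | only j, hub i => i = j
    | hub i, missing j | missing j, hub i => i ≠ j
    | s, t => s ≠ t
  symm := ⟨by rintro (i | i | i) (j | j | j) h <;> first | exact h | exact h.symm⟩
  loopless := ⟨by rintro (i | i | i) h <;> exact h rfl⟩

instance {ι : Type*} [DecidableEq ι] : DecidableRel (graph ι).Adj := by
  rintro (i | i | i) (j | j | j) <;> unfold graph <;> infer_instance

/-- A word representing `VertexType.graph (Fin 3)`. The hubs occur in the periodic order
`hub 0, hub 1, hub 2, hub 0, …` and the other letters in the periodic order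
`missing 1, only 0, missing 2, only 1, missing 0, only 2, missing 1, …`, so that both cliques
alternate. The interleaving of the two sequences is the outcome of an exhaustive search. -/
def word : List (VertexType (Fin 3)) :=
  [hub 0, missing 1, only 0, hub 1, missing 2, only 1, hub 2, hub 0, missing 0, hub 1, only 2,
    missing 1, hub 2, only 0, missing 2, hub 0]

theorem represents_word : Represents (graph (Fin 3)) word := by
  refine ⟨by decide, ?_⟩
  simp only [alternate_iff_isChain]
  decide

end VertexType

variable {V ι : Type*}

/-- The vertex `v` of `G` has the given type relative to the hubs `h`. -/
def HasVertexType (G : SimpleGraph V) (h : ι → V) (v : V) : VertexType ι → Prop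
  | .hub i => v = h i
  | .only i => v ∉ Set.range h ∧ ∀ j, G.Adj v (h j) ↔ j = i
  | .missing i => v ∉ Set.range h ∧ ∀ j, G.Adj v (h j) ↔ j ≠ i

theorem eq_cliqueBlowup_of_hasVertexType {G : SimpleGraph V} {h : ι → V}
    (hhub : Pairwise fun i j => G.Adj (h i) (h j)) (hclique : G.IsClique (Set.range h)ᶜ)
    {φ : V → VertexType ι} (hφ : ∀ v, HasVertexType G h v (φ v)) :
    G = cliqueBlowup (VertexType.graph ι) φ := by
  ext x y
  have hub_adj_iff : ∀ i j, G.Adj (h i) (h j) ↔ i ≠ j :=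
    fun i j => ⟨fun hij => ne_of_apply_ne h hij.ne, fun hij => hhub hij⟩
  have adj_iff_ne : x ∉ Set.range h → y ∉ Set.range h → (G.Adj x y ↔ x ≠ y) :=
    fun hx hy => ⟨SimpleGraph.Adj.ne, fun hxy => hclique hx hy hxy⟩
  have hx := hφ x
  have hy := hφ y
  rcases hs : φ x with i | i | i <;> rcases ht : φ y with j | j | j <;>
    simp only [HasVertexType, cliqueBlowup, VertexType.graph, hs, ht] at hx hy ⊢ <;>
    grind [G.adj_comm]

theorem exists_eq_singleton_or_compl_singleton (s : Finset (Fin 3)) (hne : s.Nonempty)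
    (huniv : s ≠ Finset.univ) : ∃ i, s = {i} ∨ s = {i}ᶜ := by
  revert s
  decide

theorem exists_hasVertexType {G : SimpleGraph V} {h : Fin 3 → V} {v : V}
    (hnotAll : v ∉ Set.range h → ¬ ∀ i, G.Adj v (h i))
    (hsome : v ∉ Set.range h → ∃ i, G.Adj v (h i)) : ∃ t, HasVertexType G h v t := by
  classical
  by_cases hv : v ∈ Set.range h
  · obtain ⟨i, rfl⟩ := hv
    exact ⟨.hub i, rfl⟩
  obtain ⟨i, hi | hi⟩ := exists_eq_singleton_or_compl_singleton {j | G.Adj v (h j)}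
    (by simpa [Finset.filter_nonempty_iff] using hsome hv)
    (by simpa [Finset.ext_iff] using hnotAll hv)
  · exact ⟨.only i, hv, by simpa [Finset.ext_iff] using hi⟩
  · exact ⟨.missing i, hv, by simpa [Finset.ext_iff] using hi⟩

end VertexType

/-- Let `G` be a graph whose vertex set is partitioned into a clique `A` and a clique
`{a, b, c}` of size `3`. If no vertex of `A` is adjacent to all three of `a`, `b`, `c`,
and every vertex of `A` is adjacent to at least one of `a`, `b`, `c`, then `G` is
word-representable. -/
theorem cobipartite_clique_three_wordRepresentable
    {V : Type*} [Fintype V] [DecidableEq V] (G : SimpleGraph V)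
    (A : Set V) (a b c : V) (hab : a ≠ b) (hac : a ≠ c) (hbc : b ≠ c)
    (hpart : ∀ x : V, x ∈ A ↔ x ≠ a ∧ x ≠ b ∧ x ≠ c)
    (hA : G.IsClique A)
    (hab' : G.Adj a b) (hac' : G.Adj a c) (hbc' : G.Adj b c)
    (hnotAll : ∀ x ∈ A, ¬ (G.Adj x a ∧ G.Adj x b ∧ G.Adj x c))
    (hsome : ∀ x ∈ A, G.Adj x a ∨ G.Adj x b ∨ G.Adj x c) :
    WordRepresentable G := by
  obtain rfl : A = (Set.range ![a, b, c])ᶜ := by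
    ext x
    simp [hpart, Fin.forall_fin_succ, eq_comm, -Matrix.range_cons]
  have hhub : Pairwise fun i j => G.Adj (![a, b, c] i) (![a, b, c] j) := by
    intro i j hij
    fin_cases i <;> fin_cases j <;> simp_all [G.adj_comm]
  have htype : ∀ v, ∃ t, HasVertexType G ![a, b, c] v t := fun v =>
    exists_hasVertexType
      (fun hv => by simpa [Fin.forall_fin_succ] using hnotAll v hv)
      (fun hv => by simpa [Fin.exists_fin_succ] using hsome v hv)
  choose φ hφ using htype
  rw [eq_cliqueBlowup_of_hasVertexType hhub hA hφ]
  exact WordRepresentable.cliqueBlowup ⟨_, VertexType.represents_word⟩ φ
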